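/- Let X and Y be complex Banach spaces, A : X → Y and B, C : Y → X bounded linear operators satisfying ABA = ACA. Then for every nonzero complex number λ, the operator AC − λI on Y is surjective if and only if the operator BA − λI on X is surjective. -/

import Mathlib

theorem stmt_14
    (X Y : Type*) [NormedAddCommGroup X] [NormedSpace ℂ X] [CompleteSpace X]
    [NormedAddCommGroup Y] [NormedSpace ℂ Y] [CompleteSpace Y]
    (A : X →L[ℂ] Y) (B C : Y →L[ℂ] X)
    (h : A ∘L B ∘L A = A ∘L C ∘L A) (lam : ℂ) (hlam : lam ≠ 0) :
    Function.Surjective ⇑(A ∘L C - lam • (1 : Y →L[ℂ] Y)) ↔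
      Function.Surjective ⇑(B ∘L A - lam • (1 : X →L[ℂ] X)) := by
  have h' : ∀ u, A (B (A u)) = A (C (A u)) := fun u => DFunLike.congr_fun h u
  constructor
  · intro hs x
    obtain ⟨v, hv⟩ := hs (A x)
    have hv1 : A (C v) - lam • v = A x := hv
    have hv2 : A (C v) - A x = lam • v := by rw [← hv1]; abel
    have hvu : A (lam⁻¹ • (C v - x)) = v := by
      rw [map_smul, map_sub, hv2, inv_smul_smul₀ hlam]
    have hb : A (B v) = A (C v) := by
      have := h' (lam⁻¹ • (C v - x))
      rwa [hvu] at this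
    have hz : A (lam⁻¹ • (B v - x)) = v := by
      rw [map_smul, map_sub, hb, hv2, inv_smul_smul₀ hlam]
    refine ⟨lam⁻¹ • (B v - x), ?_⟩
    change B (A (lam⁻¹ • (B v - x))) - lam • (lam⁻¹ • (B v - x)) = x
    rw [hz, smul_inv_smul₀ hlam]; abel
  · intro hs y
    obtain ⟨z, hz⟩ := hs (lam⁻¹ • C y)
    have hz1 : B (A z) - lam • z = lam⁻¹ • C y := hz
    have hz2 : A (C (A z)) - lam • A z = lam⁻¹ • A (C y) := by
      rw [← h', ← map_smul, ← map_sub, hz1, map_smul]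
    refine ⟨A z - lam⁻¹ • y, ?_⟩
    change A (C (A z - lam⁻¹ • y)) - lam • (A z - lam⁻¹ • y) = y
    rw [map_sub, map_sub, map_smul, map_smul, ← hz2, smul_sub, smul_inv_smul₀ hlam]; abel
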